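/- Suppose for each i = 1,…,m the functions f_{i,1},…,f_{i,n} : ℝ^d → ℝ are differentiable and L-average smooth, and set f_i = (1/n)Σ_{j=1}^n f_{i,j}. Let η > 0, p ∈ (0,1], b ≥ 1, and let x, x⁺, g, s ∈ ℝ^{m×d}. Define V = (1/m)‖g − ∇𝐟(x)‖² and C = ‖x − 𝟙x̄ᵀ‖² + η²‖s − 𝟙s̄ᵀ‖², and assume the consensus bound ‖x⁺ − 𝟙(x̄⁺)ᵀ‖² ≤ 2C. Then (1−p)·(1/m) Σ_{i=1}^m n^{−b} Σ_{ξ : {1,…,b}→{1,…,n}} ‖g(i) + (1/b)Σ_{k=1}^b (∇f_{i,ξ(k)}(x⁺(i)) − ∇f_{i,ξ(k)}(x(i))) − ∇f_i(x⁺(i))‖² ≤ (1−p)[V + (9L²/(mb)) C + (3L²/b)‖x̄⁺ − x̄‖²]. -/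

import Mathlib

/-!
Averaging over the `n ^ b` batches `ξ` is taking the expectation over `b` independent uniform
samples. The increments `∇f_{i,j}(x⁺(i)) - ∇f_{i,j}(x(i))` have mean `∇f_i(x⁺(i)) - ∇f_i(x(i))`, so
the error of the estimator at node `i` is the vector `g(i) - ∇f_i(x(i))` plus an average of `b`
independent centred vectors. All cross terms vanish in the second moment, and the variance of one
increment is at most its second moment, which average smoothness bounds by `L² ‖x⁺(i) - x(i)‖²`.
Summing over `i`, it remains to split `x⁺ - x` through the two averages `x̄⁺` and `x̄`: of the
constant `9 = 3 (1 + 2)`, one part comes from `x` and two from the consensus bound on `x⁺`.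
-/

open scoped BigOperators

noncomputable section

/-- Frobenius norm of a matrix represented by its rows (Euclidean norm for vectors). -/
def fnorm {m : ℕ} {E : Type} [NormedAddCommGroup E] (u : Fin m → E) : ℝ :=
  Real.sqrt (∑ i, ‖u i‖ ^ 2)

/-- Average of the rows of a matrix: `ū = (1/m) 𝟙ᵀ u`. -/
def rowAvg {m : ℕ} {E : Type} [AddCommGroup E] [Module ℝ E] (u : Fin m → E) : E :=
  (m : ℝ)⁻¹ • ∑ i, u i

/-- Action of the gossip matrix `W` on the rows of `u`. -/
def gossipMul {m : ℕ} (W : Fin m → Fin m → ℝ) {E : Type} [AddCommGroup E] [Module ℝ E]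
    (u : Fin m → E) : Fin m → E :=
  fun i => ∑ j, W i j • u j

/-- The pair `(u^(k), u^(k-1))` of the Chebyshev-accelerated gossip recursion
`u^(k+1) = (1+η_u) W u^(k) - η_u u^(k-1)` with
`η_u = (1 - √(1-λ₂²))/(1 + √(1-λ₂²))`. -/
def fastMixPair {m : ℕ} (W : Fin m → Fin m → ℝ) (lam : ℝ) {E : Type} [AddCommGroup E]
    [Module ℝ E] (u0 : Fin m → E) : ℕ → (Fin m → E) × (Fin m → E)
  | 0 => (u0, u0)
  | K + 1 =>
      let p := fastMixPair W lam u0 K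
      let etau := (1 - Real.sqrt (1 - lam ^ 2)) / (1 + Real.sqrt (1 - lam ^ 2))
      ((1 + etau) • gossipMul W p.1 - etau • p.2, p.1)

/-- `FastMix(u⁰, K) = u^(K)`. -/
def fastMix {m : ℕ} (W : Fin m → Fin m → ℝ) (lam : ℝ) {E : Type} [AddCommGroup E]
    [Module ℝ E] (u0 : Fin m → E) (K : ℕ) : Fin m → E :=
  (fastMixPair W lam u0 K).1

section Sampling

variable {ι E : Type*} [Fintype ι] [NormedAddCommGroup E] [InnerProductSpace ℝ E]

theorem expect_pi_fin_succ {b : ℕ} (F : (Fin (b + 1) → ι) → ℝ) :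
    𝔼 ξ, F ξ = 𝔼 j, 𝔼 ξ : Fin b → ι, F (Fin.cons j ξ) := by
  rw [← Finset.expect_product', Finset.univ_product_univ]
  exact (Fintype.expect_equiv (Fin.consEquiv fun _ => ι) _ _ fun _ => rfl).symm

variable [Nonempty ι]

theorem expect_norm_add_sq_of_sum_eq_zero {Y : ι → E} (hY : ∑ j, Y j = 0) (a : E) :
    𝔼 j, ‖a + Y j‖ ^ 2 = ‖a‖ ^ 2 + 𝔼 j, ‖Y j‖ ^ 2 := by
  have cross : 𝔼 j, inner ℝ a (Y j) = 0 := by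
    rw [Fintype.expect_eq_sum_div_card, ← inner_sum, hY, inner_zero_right, zero_div]
  simp only [norm_add_sq_real, Finset.expect_add_distrib, ← Finset.mul_expect, cross,
    Fintype.expect_const, mul_zero, add_zero]

theorem expect_norm_add_sum_sq_of_sum_eq_zero {b : ℕ} {Y : Fin b → ι → E}
    (hY : ∀ k, ∑ j, Y k j = 0) (a : E) :
    𝔼 ξ : Fin b → ι, ‖a + ∑ k, Y k (ξ k)‖ ^ 2 = ‖a‖ ^ 2 + ∑ k, 𝔼 j, ‖Y k j‖ ^ 2 := by
  induction b generalizing a with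
  | zero => simp
  | succ b ih =>
    calc 𝔼 ξ : Fin (b + 1) → ι, ‖a + ∑ k, Y k (ξ k)‖ ^ 2
        = 𝔼 j, 𝔼 ξ : Fin b → ι, ‖(a + Y 0 j) + ∑ k, Y k.succ (ξ k)‖ ^ 2 := by
          simp only [expect_pi_fin_succ, Fin.sum_univ_succ, Fin.cons_zero, Fin.cons_succ, add_assoc]
      _ = 𝔼 j, (‖a + Y 0 j‖ ^ 2 + ∑ k : Fin b, 𝔼 i, ‖Y k.succ i‖ ^ 2) := by
          simp only [ih fun k => hY k.succ]
      _ = ‖a‖ ^ 2 + ∑ k, 𝔼 j, ‖Y k j‖ ^ 2 := by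
          rw [Finset.expect_add_distrib, expect_norm_add_sq_of_sum_eq_zero (hY 0),
            Fintype.expect_const, Fin.sum_univ_succ, add_assoc]

theorem expect_norm_sub_sq_le {Y : ι → E} {M : E} (hM : ∑ j, (Y j - M) = 0) :
    𝔼 j, ‖Y j - M‖ ^ 2 ≤ 𝔼 j, ‖Y j‖ ^ 2 := by
  have bias_variance := expect_norm_add_sq_of_sum_eq_zero hM M
  simp only [add_sub_cancel] at bias_variance
  linarith [sq_nonneg ‖M‖]

theorem expect_norm_add_batch_mean_sub_sq_le {b : ℕ} (hb : b ≠ 0) {Y : ι → E} {M : E}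
    (hM : ∑ j, (Y j - M) = 0) (a : E) :
    𝔼 ξ : Fin b → ι, ‖a + (b : ℝ)⁻¹ • ∑ k, Y (ξ k) - M‖ ^ 2
      ≤ ‖a‖ ^ 2 + (b : ℝ)⁻¹ * 𝔼 j, ‖Y j‖ ^ 2 := by
  have hb0 : (b : ℝ) ≠ 0 := Nat.cast_ne_zero.2 hb
  have centred (ξ : Fin b → ι) :
      a + (b : ℝ)⁻¹ • ∑ k, Y (ξ k) - M = a + ∑ k, (b : ℝ)⁻¹ • (Y (ξ k) - M) := by
    rw [← Finset.smul_sum, Finset.sum_sub_distrib, smul_sub, Finset.sum_const, Finset.card_univ,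
      Fintype.card_fin, ← Nat.cast_smul_eq_nsmul ℝ, inv_smul_smul₀ hb0, add_sub_assoc]
  calc 𝔼 ξ : Fin b → ι, ‖a + (b : ℝ)⁻¹ • ∑ k, Y (ξ k) - M‖ ^ 2
      = ‖a‖ ^ 2 + ∑ _k : Fin b, 𝔼 j, ‖(b : ℝ)⁻¹ • (Y j - M)‖ ^ 2 := by
        simp only [centred]
        exact expect_norm_add_sum_sq_of_sum_eq_zero (Y := fun _ j => (b : ℝ)⁻¹ • (Y j - M))
          (fun _ => by rw [← Finset.smul_sum, hM, smul_zero]) a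
    _ = ‖a‖ ^ 2 + (b : ℝ)⁻¹ * 𝔼 j, ‖Y j - M‖ ^ 2 := by
        simp only [norm_smul, mul_pow, ← Finset.mul_expect, Finset.sum_const, Finset.card_univ,
          Fintype.card_fin, nsmul_eq_mul, norm_inv, RCLike.norm_natCast]
        field_simp
    _ ≤ ‖a‖ ^ 2 + (b : ℝ)⁻¹ * 𝔼 j, ‖Y j‖ ^ 2 := by
        grw [expect_norm_sub_sq_le hM]

end Sampling

section Gradient

variable {ι E : Type*} [Fintype ι] [NormedAddCommGroup E] [InnerProductSpace ℝ E] [CompleteSpace E]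

theorem gradient_const_mul_sum {f : ι → E → ℝ} {x : E} (hf : ∀ j, DifferentiableAt ℝ (f j) x)
    (c : ℝ) : gradient (fun y => c * ∑ j, f j y) x = c • ∑ j, gradient (f j) x := by
  have hsum : HasFDerivAt (fun y => ∑ j, f j y) (∑ j, fderiv ℝ (f j) x) x :=
    HasFDerivAt.fun_sum fun j _ => (hf j).hasFDerivAt
  simp only [gradient, (hsum.const_mul c).fderiv, map_smul, map_sum]

variable [Nonempty ι]

theorem sum_gradient_sub_gradient_average {f : ι → E → ℝ} {F : E → ℝ}
    (hF : ∀ y, F y = (Fintype.card ι : ℝ)⁻¹ * ∑ j, f j y) {x : E}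
    (hf : ∀ j, DifferentiableAt ℝ (f j) x) : ∑ j, (gradient (f j) x - gradient F x) = 0 := by
  rw [funext hF, gradient_const_mul_sum hf, Finset.sum_sub_distrib, Finset.sum_const,
    Finset.card_univ, ← Nat.cast_smul_eq_nsmul ℝ,
    smul_inv_smul₀ (Nat.cast_ne_zero.2 Fintype.card_ne_zero), sub_self]

theorem expect_norm_batch_gradient_sub_sq_le {b : ℕ} (hb : b ≠ 0) {f : ι → E → ℝ} {F : E → ℝ}
    (hF : ∀ y, F y = (Fintype.card ι : ℝ)⁻¹ * ∑ j, f j y) {x x' : E}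
    (hx : ∀ j, DifferentiableAt ℝ (f j) x) (hx' : ∀ j, DifferentiableAt ℝ (f j) x') (g : E) :
    𝔼 ξ : Fin b → ι,
        ‖g + (b : ℝ)⁻¹ • ∑ k, (gradient (f (ξ k)) x' - gradient (f (ξ k)) x) - gradient F x'‖ ^ 2
      ≤ ‖g - gradient F x‖ ^ 2
        + (b : ℝ)⁻¹ * 𝔼 j, ‖gradient (f j) x' - gradient (f j) x‖ ^ 2 := by
  have unbiased : ∑ j, (gradient (f j) x' - gradient (f j) x
      - (gradient F x' - gradient F x)) = 0 := by
    simp_rw [sub_sub_sub_comm _ _ (gradient F x')]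
    rw [Finset.sum_sub_distrib, sum_gradient_sub_gradient_average hF hx',
      sum_gradient_sub_gradient_average hF hx, sub_self]
  have error_eq (z : E) :
      g + z - gradient F x' = g - gradient F x + z - (gradient F x' - gradient F x) := by
    abel
  simp only [error_eq]
  exact expect_norm_add_batch_mean_sub_sq_le hb unbiased (g - gradient F x)

end Gradient

theorem norm_add₃_sq_le {E : Type*} [SeminormedAddCommGroup E] (u v w : E) :
    ‖u + v + w‖ ^ 2 ≤ 3 * (‖u‖ ^ 2 + ‖v‖ ^ 2 + ‖w‖ ^ 2) :=
  calc ‖u + v + w‖ ^ 2 ≤ (‖u‖ + ‖v‖ + ‖w‖) ^ 2 := by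
        gcongr
        exact norm_add₃_le
    _ ≤ 3 * (‖u‖ ^ 2 + ‖v‖ ^ 2 + ‖w‖ ^ 2) := by
        nlinarith [sq_nonneg (‖u‖ - ‖v‖), sq_nonneg (‖u‖ - ‖w‖), sq_nonneg (‖v‖ - ‖w‖)]

section Frobenius

variable {m : ℕ} {E : Type} [NormedAddCommGroup E]

theorem fnorm_sq (u : Fin m → E) : fnorm u ^ 2 = ∑ i, ‖u i‖ ^ 2 :=
  Real.sq_sqrt (by positivity)

theorem fnorm_sub_sq_le (u v : Fin m → E) (a c : E) :
    fnorm (u - v) ^ 2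
      ≤ 3 * (fnorm (u - fun _ => a) ^ 2 + m * ‖a - c‖ ^ 2 + fnorm (v - fun _ => c) ^ 2) := by
  have row (i : Fin m) :
      ‖u i - v i‖ ^ 2 ≤ 3 * (‖u i - a‖ ^ 2 + ‖a - c‖ ^ 2 + ‖v i - c‖ ^ 2) := by
    simpa [norm_sub_rev c] using norm_add₃_sq_le (u i - a) (a - c) (c - v i)
  simpa [fnorm_sq, Finset.sum_add_distrib, ← Finset.mul_sum]
    using Finset.sum_le_sum fun i (_ : i ∈ Finset.univ) => row i

end Frobenius

theorem statement11_general {E : Type} [NormedAddCommGroup E] [InnerProductSpace ℝ E]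
    [CompleteSpace E] {m n b : ℕ} (hm : 1 ≤ m) (hn : 1 ≤ n) (hb : 1 ≤ b) {L C : ℝ}
    {f : Fin m → Fin n → E → ℝ} {fi : Fin m → E → ℝ}
    (hfi : ∀ i y, fi i y = (n : ℝ)⁻¹ * ∑ j, f i j y) {x xp g : Fin m → E}
    (hx : ∀ i j, DifferentiableAt ℝ (f i j) (x i))
    (hxp : ∀ i j, DifferentiableAt ℝ (f i j) (xp i))
    (havg : ∀ i, (n : ℝ)⁻¹ * ∑ j, ‖gradient (f i j) (xp i) - gradient (f i j) (x i)‖ ^ 2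
      ≤ L ^ 2 * ‖xp i - x i‖ ^ 2)
    (hC : fnorm (x - fun _ => rowAvg x) ^ 2 ≤ C)
    (hCp : fnorm (xp - fun _ => rowAvg xp) ^ 2 ≤ 2 * C) :
    (m : ℝ)⁻¹ * ∑ i, ((n : ℝ) ^ b)⁻¹ * ∑ ξ : Fin b → Fin n,
        ‖g i + (b : ℝ)⁻¹ • (∑ k, (gradient (f i (ξ k)) (xp i) - gradient (f i (ξ k)) (x i)))
          - gradient (fi i) (xp i)‖ ^ 2
      ≤ (m : ℝ)⁻¹ * fnorm (g - fun i => gradient (fi i) (x i)) ^ 2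
          + (9 * L ^ 2 / ((m : ℝ) * (b : ℝ))) * C
          + (3 * L ^ 2 / (b : ℝ)) * ‖rowAvg xp - rowAvg x‖ ^ 2 := by
  have : Nonempty (Fin n) := ⟨⟨0, hn⟩⟩
  have node (i : Fin m) : ((n : ℝ) ^ b)⁻¹ * ∑ ξ : Fin b → Fin n,
        ‖g i + (b : ℝ)⁻¹ • (∑ k, (gradient (f i (ξ k)) (xp i) - gradient (f i (ξ k)) (x i)))
          - gradient (fi i) (xp i)‖ ^ 2
      ≤ ‖g i - gradient (fi i) (x i)‖ ^ 2 + (b : ℝ)⁻¹ * (L ^ 2 * ‖xp i - x i‖ ^ 2) := by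
    have variance := expect_norm_batch_gradient_sub_sq_le (Nat.ne_of_gt hb)
      (by simpa using hfi i) (hx i) (hxp i) (g i)
    simp only [Fintype.expect_eq_sum_div_card, Fintype.card_fun, Fintype.card_fin, Nat.cast_pow,
      div_eq_inv_mul] at variance
    exact variance.trans (by grw [havg i])
  have displacement : fnorm (xp - x) ^ 2 ≤ 9 * C + 3 * m * ‖rowAvg xp - rowAvg x‖ ^ 2 := by
    linarith [fnorm_sub_sq_le xp x (rowAvg xp) (rowAvg x)]
  calc _ ≤ (m : ℝ)⁻¹ * ∑ i,
          (‖g i - gradient (fi i) (x i)‖ ^ 2 + (b : ℝ)⁻¹ * (L ^ 2 * ‖xp i - x i‖ ^ 2)) := by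
        gcongr with i
        exact node i
    _ = (m : ℝ)⁻¹ * (fnorm (g - fun i => gradient (fi i) (x i)) ^ 2
          + (b : ℝ)⁻¹ * (L ^ 2 * fnorm (xp - x) ^ 2)) := by
        simp only [fnorm_sq, Pi.sub_apply, Finset.sum_add_distrib, ← Finset.mul_sum]
    _ ≤ (m : ℝ)⁻¹ * (fnorm (g - fun i => gradient (fi i) (x i)) ^ 2
          + (b : ℝ)⁻¹ * (L ^ 2 * (9 * C + 3 * m * ‖rowAvg xp - rowAvg x‖ ^ 2))) := by
        gcongr
    _ = _ := by
        field_simp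
        ring

theorem statement11 (m n d b : ℕ) (hm : 1 ≤ m) (hn : 1 ≤ n) (hb : 1 ≤ b)
    (L η p : ℝ) (hη : 0 < η) (hp0 : 0 < p) (hp1 : p ≤ 1)
    (f : Fin m → Fin n → EuclideanSpace ℝ (Fin d) → ℝ)
    (hdiff : ∀ i j, Differentiable ℝ (f i j))
    (havg : ∀ i, ∀ x x' : EuclideanSpace ℝ (Fin d),
      (n : ℝ)⁻¹ * ∑ j, ‖gradient (f i j) x - gradient (f i j) x'‖ ^ 2 ≤ L ^ 2 * ‖x - x'‖ ^ 2)
    (fi : Fin m → EuclideanSpace ℝ (Fin d) → ℝ)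
    (hfi : ∀ i x, fi i x = (n : ℝ)⁻¹ * ∑ j, f i j x)
    (x xp g s : Fin m → EuclideanSpace ℝ (Fin d))
    (hcons : fnorm (xp - fun _ => rowAvg xp) ^ 2 ≤
      2 * (fnorm (x - fun _ => rowAvg x) ^ 2 + η ^ 2 * fnorm (s - fun _ => rowAvg s) ^ 2)) :
    (1 - p) * ((m : ℝ)⁻¹ * ∑ i, ((n : ℝ) ^ b)⁻¹ * ∑ ξ : Fin b → Fin n,
        ‖g i + (b : ℝ)⁻¹ • (∑ k, (gradient (f i (ξ k)) (xp i) - gradient (f i (ξ k)) (x i)))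
          - gradient (fi i) (xp i)‖ ^ 2)
      ≤ (1 - p) * ((m : ℝ)⁻¹ * fnorm (g - fun i => gradient (fi i) (x i)) ^ 2
          + (9 * L ^ 2 / ((m : ℝ) * (b : ℝ))) *
              (fnorm (x - fun _ => rowAvg x) ^ 2 + η ^ 2 * fnorm (s - fun _ => rowAvg s) ^ 2)
          + (3 * L ^ 2 / (b : ℝ)) * ‖rowAvg xp - rowAvg x‖ ^ 2) :=
  mul_le_mul_of_nonneg_left
    (statement11_general hm hn hb hfi (fun i j => hdiff i j _) (fun i j => hdiff i j _)
      (fun i => havg i (xp i) (x i)) (le_add_of_nonneg_right (by positivity)) hcons)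
    (sub_nonneg.2 hp1)
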